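/- For coprime positive integers s ≥ 2 and t, the sum over all self-conjugate (s,t)-cores λ of the reciprocal of the order of the stabiliser of λ under the level-t action of the affine hyperoctahedral group H̃_s on self-conjugate s-cores equals t^u/(2^u · u!), where u = ⌊s/2⌋. -/

import Mathlib

/-- A partition: a weakly decreasing, eventually-zero sequence of naturals
(0-indexed: `f i` is the `(i+1)`-th part). -/
structure Partn where
  f : ℕ → ℕ
  antitone : Antitone f
  eventually_zero : ∃ N, ∀ i, N ≤ i → f i = 0

/-- The beta-set `B(λ) = {λ_i - i : i ≥ 1}`. -/
def betaSet (p : Partn) : Set ℤ := {b | ∃ i : ℕ, b = (p.f i : ℤ) - (i + 1)}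

/-- `conjCount p j` is the `(j+1)`-th part of the conjugate partition. -/
noncomputable def conjCount (p : Partn) (j : ℕ) : ℕ := Set.ncard {i : ℕ | j + 1 ≤ p.f i}

/-- Hook length of the cell in row `r+1`, column `c+1` (1-indexed formula
`1 + (λ_r - r) + (λ'_c - c)`). -/
noncomputable def hookLen (p : Partn) (r c : ℕ) : ℤ :=
  1 + ((p.f r : ℤ) - (r + 1)) + ((conjCount p c : ℤ) - (c + 1))

/-- `p` is an `s`-core: no hook length is divisible by `s`. -/
def IsCore (s : ℕ) (p : Partn) : Prop :=
  ∀ r c : ℕ, c < p.f r → ¬ ((s : ℤ) ∣ hookLen p r c)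

/-- `p` is self-conjugate. -/
def SelfConj (p : Partn) : Prop := ∀ j, p.f j = conjCount p j

/-- The `s`-set of an `s`-core: `S(λ) = (B(λ)+s) \ B(λ)`. -/
def sSet (s : ℕ) (p : Partn) : Set ℤ := {x | x - s ∈ betaSet p ∧ x ∉ betaSet p}

/-- An `s`-set: `s` integers, pairwise incongruent mod `s`, summing to `C(s,2)`. -/
def IsSSet (s : ℕ) (X : Set ℤ) : Prop :=
  X.ncard = s ∧ (∀ a ∈ X, ∀ b ∈ X, a ≠ b → ¬ ((s : ℤ) ∣ (a - b))) ∧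
    (∑ᶠ x ∈ X, x) = (s.choose 2 : ℤ)

/-- The affine symmetric group `W̃_s`, as a set of permutations of `ℤ`:
`w(m+s) = w(m)+s` and `w(0)+⋯+w(s-1) = C(s,2)`. -/
def AffSymSet (s : ℕ) : Set (Equiv.Perm ℤ) :=
  {w | (∀ m : ℤ, w (m + s) = w m + s) ∧
    (∑ i ∈ Finset.range s, w (i : ℤ)) = (s.choose 2 : ℤ)}

/-- The underlying function of the Coxeter generator `w_i` of `W̃_s`, where `a = i - 1`:
swaps `m` and `m+1` whenever `m ≡ i - 1 (mod s)`. -/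
def genFun (s : ℕ) (a : ℤ) : ℤ → ℤ := fun m =>
  if (s : ℤ) ∣ (m - a) then m + 1 else if (s : ℤ) ∣ (m - a - 1) then m - 1 else m

lemma genFun_involutive (s : ℕ) (hs : 2 ≤ s) (a : ℤ) :
    Function.Involutive (genFun s a) := by
  have h1 : ¬ ((s : ℤ) ∣ 1) := by
    intro h
    have := Int.le_of_dvd one_pos h
    omega
  intro m
  unfold genFun
  by_cases hA : (s : ℤ) ∣ (m - a)
  · rw [if_pos hA]
    have hB : ¬ (s : ℤ) ∣ (m + 1 - a) := by
      intro h
      have := dvd_sub h hA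
      rw [show m + 1 - a - (m - a) = 1 by ring] at this
      exact h1 this
    rw [if_neg hB, if_pos (by rw [show m + 1 - a - 1 = m - a by ring]; exact hA)]
    ring
  · rw [if_neg hA]
    by_cases hB : (s : ℤ) ∣ (m - a - 1)
    · rw [if_pos hB, if_pos (by rw [show m - 1 - a = m - a - 1 by ring]; exact hB)]
      ring
    · rw [if_neg hB, if_neg hA, if_neg hB]

/-- The Coxeter generator `w_i` of `W̃_s`, where `a = i - 1`. -/
def genPerm (s : ℕ) (hs : 2 ≤ s) (a : ℤ) : Equiv.Perm ℤ :=
  (genFun_involutive s hs a).toPerm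

/-- The constant `c = (s-1)(t-1)/2`. -/
def lc (s t : ℕ) : ℤ := (((s : ℤ) - 1) * ((t : ℤ) - 1)) / 2

/-- The image `ẘ_i` of the generator `w_i` under the level `t` action on `ℤ`:
`m ↦ m + t` if `m ≡ (i-1)t - c (mod s)`, `m ↦ m - t` if `m ≡ it - c (mod s)`,
`m ↦ m` otherwise. -/
def levelGenFun (s t : ℕ) (i : ℤ) : ℤ → ℤ := fun m =>
  if (s : ℤ) ∣ (m - ((i - 1) * t - lc s t)) then m + t
  else if (s : ℤ) ∣ (m - (i * t - lc s t)) then m - t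
  else m

/-- `Φ` is (the restriction to `W̃_s` of) the level `t` action of `W̃_s` on `ℤ`:
a multiplicative map on `W̃_s` sending each generator `w_i` to `ẘ_i`. -/
def IsLevelTAction (s t : ℕ) (hs : 2 ≤ s) (Φ : Equiv.Perm ℤ → Equiv.Perm ℤ) : Prop :=
  (∀ w v : Equiv.Perm ℤ, w ∈ AffSymSet s → v ∈ AffSymSet s → Φ (w * v) = Φ w * Φ v) ∧
  (∀ i m : ℤ, Φ (genPerm s hs (i - 1)) m = levelGenFun s t i m)

/-- Removing a rim hook of length `t`, in terms of beta-sets: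
`μ` is obtained from `λ` by removing a rim `t`-hook. -/
def RemoveHook (t : ℕ) (p q : Partn) : Prop :=
  ∃ b ∈ betaSet p, b - t ∉ betaSet p ∧ betaSet q = insert (b - t) (betaSet p \ {b})

/-!
A self-conjugate `s`-core is recorded by its profile `y`: for each integer `k`, the beta-set meets
the residue class of `k * t - c` modulo `s` in a ray, and `y k` is the depth at which that ray ends.
Conjugation becomes the symmetry `y (-1 - k) = -t - y k`, the core is a `t`-core exactly when `y` is
monotone, and an element of `H̃_s` fixes the core exactly when `y` is invariant under it.

Every `H̃_s`-orbit of profiles contains exactly one monotone profile, so the sum runs over orbits.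
Reducing the values of `y` on the window `{0, …, s - 1}` modulo `t` matches orbits and stabilisers
of `H̃_s` on profiles with those of the finite hyperoctahedral group, of order `2 ^ u * u!`, on the
odd functions `Fin s → ZMod t`, of which there are `t ^ u`. Over the orbits of a finite group `H`
on a finite set `X`, the sum of the reciprocals of the stabiliser orders is `|X| / |H|`.
-/

/-! ### Beta-sets of partitions -/

namespace Partn

lemma lt_conjCount_iff (p : Partn) (i j : ℕ) : i < conjCount p j ↔ j < p.f i := by
  have hlower : IsLowerSet {i : ℕ | j + 1 ≤ p.f i} := fun _ _ hle h => le_trans h (p.antitone hle)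
  obtain ⟨N, hN⟩ := p.eventually_zero
  obtain ⟨n, hn⟩ := hlower.eq_univ_or_Iio.resolve_left fun h => by
    have : j + 1 ≤ p.f N := h.ge (Set.mem_univ N)
    have := hN N le_rfl
    omega
  have hcount : conjCount p j = n := by
    rw [conjCount, hn, ← Finset.coe_Iio, Set.ncard_coe_finset, Nat.card_Iio]
  have hi : i ∈ {i : ℕ | j + 1 ≤ p.f i} ↔ i ∈ Set.Iio n := by rw [hn]
  rw [hcount]
  exact hi.symm

/-- The conjugate partition, whose Young diagram is the transpose. -/
noncomputable def conj (p : Partn) : Partn where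
  f := conjCount p
  antitone := fun a b hab => by
    refine le_of_forall_lt fun i hi => ?_
    rw [lt_conjCount_iff] at hi ⊢
    omega
  eventually_zero := by
    refine ⟨p.f 0, fun j hj => ?_⟩
    have := (lt_conjCount_iff p 0 j).not
    omega

lemma strictAnti_beta (p : Partn) : StrictAnti fun i : ℕ => (p.f i : ℤ) - (i + 1) := by
  intro i j hij
  have := p.antitone hij.le
  dsimp only
  omega

lemma f_injective : Function.Injective f := by
  rintro ⟨f, _, _⟩ ⟨g, _, _⟩ h
  cases (h : f = g)
  rfl

lemma betaSet_injective : Function.Injective betaSet := by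
  intro p q h
  have hrange (p : Partn) :
      Set.range (fun i : ℕ => -((p.f i : ℤ) - (i + 1))) = Neg.neg '' betaSet p := by
    rw [Set.range_comp' Neg.neg]
    congr 1
    ext b
    exact exists_congr fun _ => eq_comm
  have hfun := (StrictMono.range_inj p.strictAnti_beta.neg q.strictAnti_beta.neg).mp
    ((hrange p).trans (h ▸ (hrange q).symm))
  refine f_injective (funext fun i => ?_)
  have : -((p.f i : ℤ) - (i + 1)) = -((q.f i : ℤ) - (i + 1)) := congrFun hfun i
  omega

lemma mem_betaSet_of_lt (p : Partn) : ∃ N : ℤ, ∀ b < N, b ∈ betaSet p := by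
  obtain ⟨N, hN⟩ := p.eventually_zero
  refine ⟨-N, fun b hb => ⟨(-1 - b).toNat, ?_⟩⟩
  rw [hN _ (by omega)]
  omega

lemma lt_of_mem_betaSet (p : Partn) {b : ℤ} (hb : b ∈ betaSet p) : b < p.f 0 := by
  obtain ⟨i, rfl⟩ := hb
  have := p.antitone (Nat.zero_le i)
  omega

lemma notMem_betaSet_iff (p : Partn) (b : ℤ) : b ∉ betaSet p ↔ -1 - b ∈ betaSet p.conj := by
  constructor
  · intro hb
    have hex : ∃ i : ℕ, (p.f i : ℤ) - (i + 1) < b := by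
      obtain ⟨N, hN⟩ := p.eventually_zero
      refine ⟨N + b.natAbs, ?_⟩
      rw [hN _ (Nat.le_add_right _ _)]
      omega
    -- `b` is the gap reached from below by the first row `i` whose beta-number is smaller.
    obtain ⟨i, hi, hmin⟩ : ∃ i : ℕ, (p.f i : ℤ) - (i + 1) < b ∧
        ∀ j < i, ¬ (p.f j : ℤ) - (j + 1) < b :=
      ⟨Nat.find hex, Nat.find_spec hex, fun _ => Nat.find_min hex⟩
    have hgt (j : ℕ) (hj : j < i) : b < (p.f j : ℤ) - (j + 1) :=
      lt_of_le_of_ne (not_lt.mp (hmin j hj)) fun h => hb ⟨j, h⟩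
    obtain ⟨c, hc⟩ := Int.eq_ofNat_of_zero_le (show 0 ≤ b + i by omega)
    have hconj : conjCount p c = i := by
      refine eq_of_forall_lt_iff fun j => ?_
      rw [lt_conjCount_iff]
      constructor
      · intro hj
        by_contra! hij
        have := p.antitone hij
        omega
      · intro hj
        have := hgt (i - 1) (by omega)
        have := p.antitone (show j ≤ i - 1 by omega)
        omega
    exact ⟨c, by change _ = (conjCount p c : ℤ) - _; omega⟩
  · rintro ⟨c, hc⟩ ⟨i, hi⟩
    change _ = (conjCount p c : ℤ) - _ at hc
    have := lt_conjCount_iff p i c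
    omega

lemma selfConj_iff_conj_eq (p : Partn) : SelfConj p ↔ p.conj = p :=
  ⟨fun h => f_injective (funext h).symm, fun h j => (congrFun (congrArg f h) j).symm⟩

lemma selfConj_iff (p : Partn) : SelfConj p ↔ ∀ b, b ∈ betaSet p ↔ -1 - b ∉ betaSet p := by
  rw [selfConj_iff_conj_eq, ← betaSet_injective.eq_iff, Set.ext_iff]
  refine forall_congr' fun b => ?_
  rw [notMem_betaSet_iff, sub_sub_cancel]
  exact Iff.comm

lemma hookLen_eq (p : Partn) (r c : ℕ) :
    hookLen p r c = ((p.f r : ℤ) - (r + 1)) - (c - conjCount p c) := by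
  rw [hookLen]
  ring

lemma isCore_iff {s : ℕ} (hs : 0 < s) (p : Partn) :
    IsCore s p ↔ ∀ b ∈ betaSet p, b - s ∈ betaSet p := by
  constructor
  · rintro hcore b ⟨r, rfl⟩
    by_contra hgap
    obtain ⟨c, hc⟩ := (notMem_betaSet_iff _ _).mp hgap
    change _ = (conjCount p c : ℤ) - _ at hc
    refine hcore r c ?_ ⟨1, by rw [hookLen_eq]; omega⟩
    have := lt_conjCount_iff p r c
    omega
  · rintro hsub r c hrc ⟨q, hq⟩
    have hpos : 0 < (s : ℤ) * q := by
      have := (lt_conjCount_iff p r c).mpr hrc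
      rw [← hq, hookLen_eq]
      omega
    lift q to ℕ using (pos_of_mul_pos_right hpos (by positivity)).le
    have hrunner (n : ℕ) : (p.f r : ℤ) - (r + 1) - s * n ∈ betaSet p := by
      induction n with
      | zero => exact ⟨r, by simp⟩
      | succ n ih => simpa [mul_add, sub_sub, add_assoc] using hsub _ ih
    refine (notMem_betaSet_iff p _).mpr ⟨c, ?_⟩ (hrunner q)
    change _ = (conjCount p c : ℤ) - _
    rw [← hq, hookLen_eq]
    omega

lemma exists_betaSet_eq_range {e : ℕ → ℤ} (he : StrictAnti e) {N : ℕ}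
    (hN : ∀ i, N ≤ i → e i = -(i + 1)) : ∃ p, betaSet p = Set.range e := by
  have hanti : Antitone fun i : ℕ => e i + (i + 1) := antitone_nat_of_succ_le fun i => by
    have := he (show i < i + 1 by omega)
    push_cast
    omega
  have hnonneg (i : ℕ) : 0 ≤ e i + (i + 1) := by
    refine le_trans ?_ (hanti (le_max_left i N))
    simp [hN _ (le_max_right i N)]
  refine ⟨⟨fun i => (e i + (i + 1)).toNat, fun i j hij => Int.toNat_le_toNat (hanti hij), N,
    fun i hi => by simp [hN i hi]⟩, ?_⟩
  ext b
  refine exists_congr fun i => ?_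
  have := hnonneg i
  dsimp only
  omega

end Partn

lemma count_mem_symmetric {B : Set ℤ} (hsymm : ∀ b, b ∈ B ↔ -1 - b ∉ B) (K : ℕ)
    [DecidablePred fun n : ℕ => (K : ℤ) - 1 - n ∈ B] :
    Nat.count (fun n : ℕ => (K : ℤ) - 1 - n ∈ B) (2 * K) = K := by
  -- Symmetry pairs the positions `K - 1 - n` and `K - 1 - (2 * K - 1 - n)`.
  have hswap : ∀ n < 2 * K,
      ((K : ℤ) - 1 - n ∈ B ↔ (K : ℤ) - 1 - (2 * K - 1 - n : ℕ) ∉ B) := fun n hn => by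
    rw [hsymm]
    congr! 2
    omega
  have hcard := Finset.card_filter_add_card_filter_not (s := Finset.range (2 * K))
    (fun n : ℕ => (K : ℤ) - 1 - n ∈ B)
  have hrefl : (Finset.filter (fun n : ℕ => (K : ℤ) - 1 - n ∈ B) (Finset.range (2 * K))).card =
      (Finset.filter (fun n : ℕ => (K : ℤ) - 1 - n ∉ B) (Finset.range (2 * K))).card := by
    have hrev (n : ℕ) (hn : n < 2 * K) : 2 * K - 1 - (2 * K - 1 - n) = n := by omega
    refine Finset.card_nbij' (2 * K - 1 - ·) (2 * K - 1 - ·) ?_ ?_ ?_ ?_ <;>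
      simp only [Finset.coe_filter, Finset.mem_range] <;> rintro n ⟨hn, h⟩
    · exact ⟨by dsimp only; omega, (hswap n hn).mp h⟩
    · refine ⟨by dsimp only; omega, (hswap _ (by dsimp only; omega)).mpr ?_⟩
      rwa [hrev n hn]
    · exact hrev n hn
    · exact hrev n hn
  rw [Nat.count_eq_card_filter_range]
  rw [Finset.card_range] at hcard
  omega

lemma exists_betaSet_eq_of_symmetric {B : Set ℤ} (hsymm : ∀ b, b ∈ B ↔ -1 - b ∉ B) {N : ℤ}
    (hN : ∀ b < N, b ∈ B) : ∃ p, betaSet p = B := by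
  classical
  set K := N.natAbs
  set P : ℕ → Prop := fun n => (K : ℤ) - 1 - n ∈ B
  have hlarge : ∀ n, 2 * K ≤ n → P n := fun n hn => hN _ (by omega)
  have hinf : (Set.ofPred P).Infinite :=
    (Set.Ici_infinite (2 * K)).mono hlarge
  have hcount (i : ℕ) : Nat.count P (2 * K + i) = K + i := by
    induction i with
    | zero => exact count_mem_symmetric hsymm K
    | succ i ih =>
      rw [← add_assoc, Nat.count_succ, ih, if_pos (hlarge _ (Nat.le_add_right _ _)), add_assoc]
  have hnth (i : ℕ) : Nat.nth P (K + i) = 2 * K + i := by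
    rw [← hcount i]
    exact Nat.nth_count (hlarge _ (Nat.le_add_right _ _))
  have hanti : StrictAnti fun i => (K : ℤ) - 1 - Nat.nth P i := fun i j hij => by
    have := Nat.nth_strictMono hinf hij
    dsimp only
    omega
  obtain ⟨p, hp⟩ := Partn.exists_betaSet_eq_range hanti (N := K) fun i hi => by
    obtain ⟨d, rfl⟩ := Nat.exists_eq_add_of_le hi
    rw [hnth]
    push_cast
    ring
  refine ⟨p, hp.trans (Set.Subset.antisymm ?_ fun b hb => ?_)⟩
  · rintro _ ⟨i, rfl⟩
    exact Nat.nth_mem_of_infinite hinf i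
  · have hlt : b < K := by
      by_contra! hle
      exact (hsymm b).mp hb (hN _ (by omega))
    have hPb : P (K - 1 - b).toNat := by
      change (K : ℤ) - 1 - _ ∈ B
      rwa [show (K : ℤ) - 1 - ((K : ℤ) - 1 - b).toNat = b by omega]
    refine ⟨Nat.count P (K - 1 - b).toNat, ?_⟩
    dsimp only
    rw [Nat.nth_count hPb]
    omega

/-! ### Residues and quasiperiodic functions -/

lemma quasiperiodic_add_mul {F : ℤ → ℤ} {a b : ℤ} (hF : ∀ k, F (k + a) = F k + b) (k q : ℤ) :
    F (k + a * q) = F k + b * q := by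
  simpa [mul_comm] using AddConstMapClass.map_add_zsmul (⟨F, hF⟩ : AddConstMap ℤ ℤ a b) k q

lemma rev_coe_eq {s : ℕ} (i : Fin s) : ((i.rev : ℕ) : ℤ) = -1 - i + s := by
  have := i.isLt
  rw [Fin.val_rev]
  omega

lemma neg_one_sub_add_mul {s : ℕ} (i : Fin s) (q : ℤ) :
    -1 - ((i : ℤ) + s * q) = i.rev + s * (-1 - q) := by
  rw [rev_coe_eq]
  ring

section Residue

variable {s : ℕ} [NeZero s]

variable (s) in
/-- The class of `k` modulo `s`, as an element of the window `{0, …, s - 1}`. -/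
def residue (k : ℤ) : Fin s := (Int.divModEquiv s k).2

lemma divModEquiv_add_mul (i : Fin s) (q : ℤ) :
    Int.divModEquiv s ((i : ℤ) + s * q) = (q, i) := by
  rw [← Equiv.eq_symm_apply, Int.divModEquiv_symm_apply]
  ring

lemma residue_add_mul (i : Fin s) (q : ℤ) : residue s ((i : ℤ) + s * q) = i :=
  congrArg Prod.snd (divModEquiv_add_mul i q)

lemma residue_coe (i : Fin s) : residue s (i : ℤ) = i := by
  simpa using residue_add_mul i 0

variable (s) in
lemma exists_eq_residue_add_mul (k : ℤ) : ∃ q : ℤ, k = residue s k + s * q := by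
  refine ⟨(Int.divModEquiv s k).1, ?_⟩
  conv_lhs => rw [← (Int.divModEquiv s).symm_apply_apply k, Int.divModEquiv_symm_apply]
  rw [residue]
  ring

variable (s) in
lemma exists_eq_fin_add_mul (k : ℤ) : ∃ (i : Fin s) (q : ℤ), k = i + s * q :=
  ⟨residue s k, exists_eq_residue_add_mul s k⟩

lemma residue_eq_iff {j k : ℤ} : residue s j = residue s k ↔ (s : ℤ) ∣ j - k := by
  obtain ⟨q, hq⟩ := exists_eq_residue_add_mul s j
  obtain ⟨r, hr⟩ := exists_eq_residue_add_mul s k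
  constructor
  · intro h
    refine ⟨q - r, ?_⟩
    rw [hq, hr, h]
    ring
  · rintro ⟨d, hd⟩
    rw [show j = (residue s k : ℤ) + s * (r + d) by linear_combination hd + hr, residue_add_mul]

lemma residue_neg_one_sub (k : ℤ) : residue s (-1 - k) = (residue s k).rev := by
  obtain ⟨i, q, rfl⟩ := exists_eq_fin_add_mul s k
  rw [neg_one_sub_add_mul, residue_add_mul, residue_add_mul]

lemma periodic_residue {F : ℤ → ℤ} (hF : ∀ k, F (k + s) = F k) (k : ℤ) :
    F (residue s k) = F k := by
  obtain ⟨q, hq⟩ := exists_eq_residue_add_mul s k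
  have := quasiperiodic_add_mul (b := 0) (by simpa using hF) (residue s k : ℤ) q
  rw [← hq] at this
  simpa using this.symm

/-- The extension of `η : Fin s → ℤ` to the integers satisfying `F (k + s) = F k + b`. -/
def quasiExtend (b : ℤ) (η : Fin s → ℤ) (k : ℤ) : ℤ :=
  η (Int.divModEquiv s k).2 + b * (Int.divModEquiv s k).1

lemma quasiExtend_add_mul (b : ℤ) (η : Fin s → ℤ) (i : Fin s) (q : ℤ) :
    quasiExtend b η (i + s * q) = η i + b * q := by
  rw [quasiExtend, divModEquiv_add_mul]

lemma quasiExtend_add (b : ℤ) (η : Fin s → ℤ) (k : ℤ) :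
    quasiExtend b η (k + s) = quasiExtend b η k + b := by
  obtain ⟨i, q, rfl⟩ := exists_eq_fin_add_mul s k
  rw [show (i : ℤ) + s * q + s = i + s * (q + 1) by ring, quasiExtend_add_mul,
    quasiExtend_add_mul]
  ring

lemma quasiExtend_neg_one_sub (b : ℤ) {η : Fin s → ℤ} (hη : ∀ i, η i.rev = -η i) (k : ℤ) :
    quasiExtend b η (-1 - k) = -b - quasiExtend b η k := by
  obtain ⟨i, q, rfl⟩ := exists_eq_fin_add_mul s k
  rw [neg_one_sub_add_mul, quasiExtend_add_mul, quasiExtend_add_mul, hη]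
  ring

lemma quasiExtend_monotone {b : ℤ} {η : Fin s → ℤ} (hη : Monotone η)
    (hspread : ∀ i j, η i ≤ η j + b) : Monotone (quasiExtend b η) := by
  refine monotone_int_of_le_succ fun k => ?_
  obtain ⟨i, q, rfl⟩ := exists_eq_fin_add_mul s k
  obtain hlt | hlast := lt_or_ge ((i : ℕ) + 1) s
  · have hsucc : (i : ℤ) + s * q + 1 = ((⟨i + 1, hlt⟩ : Fin s) : ℤ) + s * q := by
      push_cast
      ring
    rw [hsucc, quasiExtend_add_mul, quasiExtend_add_mul]
    exact add_le_add_left (hη (Fin.mk_le_mk.mpr (Nat.le_succ _) : i ≤ ⟨i + 1, hlt⟩)) _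
  · have hwrap : (i : ℤ) + s * q + 1 = ((0 : Fin s) : ℤ) + s * (q + 1) := by
      have : ((i : ℕ) : ℤ) + 1 = s := by
        have := i.isLt
        omega
      rw [Fin.val_zero, Nat.cast_zero]
      linear_combination this
    rw [hwrap, quasiExtend_add_mul, quasiExtend_add_mul]
    linarith [hspread i 0]

end Residue

/-! ### Periodic permutations -/

/-- The permutations `w` of the integers with `w (m + s) = w m + s`. -/
def periodicPerm (s : ℕ) : Subgroup (Equiv.Perm ℤ) :=
  Subgroup.centralizer {Equiv.addRight (s : ℤ)}

lemma mem_periodicPerm_iff {s : ℕ} {w : Equiv.Perm ℤ} :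
    w ∈ periodicPerm s ↔ ∀ m, w (m + s) = w m + s := by
  rw [periodicPerm, Subgroup.mem_centralizer_singleton_iff, Equiv.ext_iff]
  rfl

section PeriodicPerm

variable {s : ℕ} [NeZero s]

lemma residue_apply_residue {w : Equiv.Perm ℤ} (hw : w ∈ periodicPerm s) (k : ℤ) :
    residue s (w (residue s k)) = residue s (w k) := by
  obtain ⟨q, hq⟩ := exists_eq_residue_add_mul s k
  conv_rhs => rw [hq, quasiperiodic_add_mul (mem_periodicPerm_iff.mp hw)]
  exact residue_eq_iff.mpr ⟨-q, by ring⟩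

variable (s) in
/-- The action of periodic permutations on residue classes modulo `s`. -/
def residueHom : periodicPerm s →* Equiv.Perm (Fin s) :=
  MonoidHom.toHomPerm
    { toFun w i := residue s (w.1 i)
      map_one' := funext residue_coe
      map_mul' w v := funext fun i => (residue_apply_residue w.2 (v.1 i)).symm }

lemma residueHom_residue (w : periodicPerm s) (k : ℤ) :
    residueHom s w (residue s k) = residue s (w.1 k) :=
  residue_apply_residue w.2 k

lemma sum_periodic_comp {F : ℤ → ℤ} (hF : ∀ k, F (k + s) = F k) {w : Equiv.Perm ℤ}
    (hw : w ∈ periodicPerm s) : ∑ i : Fin s, F (w i) = ∑ i : Fin s, F i := by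
  rw [← Equiv.sum_comp (residueHom s ⟨w, hw⟩) fun i : Fin s => F i]
  exact Finset.sum_congr rfl fun i _ => (periodic_residue hF (w i)).symm

end PeriodicPerm

/-! ### The affine symmetric group and its generators -/

section AffSym

variable {s : ℕ}

variable (s) in
/-- The total displacement of `w` over one period; a periodic permutation lies in `W̃_s` when it
vanishes. -/
def displacement (w : Equiv.Perm ℤ) : ℤ := ∑ i : Fin s, (w i - i)

lemma mem_affSymSet_iff {w : Equiv.Perm ℤ} :
    w ∈ AffSymSet s ↔ w ∈ periodicPerm s ∧ displacement s w = 0 := by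
  have hid : ∑ i ∈ Finset.range s, (i : ℤ) = s.choose 2 := by
    rw [Nat.choose_two_right, ← Finset.sum_range_id]
    push_cast
    rfl
  rw [displacement, Fin.sum_univ_eq_sum_range (fun i : ℕ => w i - i), Finset.sum_sub_distrib, hid,
    sub_eq_zero, mem_periodicPerm_iff]
  rfl

lemma displacement_one : displacement s 1 = 0 :=
  Finset.sum_eq_zero fun _ _ => sub_self _

lemma one_mem_affSymSet : (1 : Equiv.Perm ℤ) ∈ AffSymSet s :=
  mem_affSymSet_iff.mpr ⟨one_mem _, displacement_one⟩

lemma displacement_mul [NeZero s] {w v : Equiv.Perm ℤ} (hw : w ∈ periodicPerm s)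
    (hv : v ∈ periodicPerm s) :
    displacement s (w * v) = displacement s w + displacement s v := by
  have hreindex : ∑ i : Fin s, (w (v i) - v i) = displacement s w :=
    sum_periodic_comp (F := fun k => w k - k)
      (fun k => by rw [mem_periodicPerm_iff.mp hw]; ring) hv
  rw [← hreindex, displacement, displacement, ← Finset.sum_add_distrib]
  exact Finset.sum_congr rfl fun i _ => by rw [Equiv.Perm.mul_apply]; ring

lemma mul_mem_affSymSet [NeZero s] {w v : Equiv.Perm ℤ} (hw : w ∈ AffSymSet s)
    (hv : v ∈ AffSymSet s) : w * v ∈ AffSymSet s := by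
  rw [mem_affSymSet_iff] at hw hv ⊢
  exact ⟨mul_mem hw.1 hv.1, by rw [displacement_mul hw.1 hv.1, hw.2, hv.2, add_zero]⟩

lemma eq_one_of_strictMono [NeZero s] {w : Equiv.Perm ℤ} (hw : w ∈ AffSymSet s)
    (hmono : StrictMono w) : w = 1 := by
  have hstep (k : ℤ) : w (k + 1) = w k + 1 :=
    (hmono.orderIsoOfSurjective w w.surjective).map_succ k
  have hlin (k : ℤ) : w k = w 0 + k := by
    simpa using quasiperiodic_add_mul hstep 0 k
  have hzero : w 0 = 0 := by
    have hdisp := (mem_affSymSet_iff.mp hw).2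
    simpa [displacement, fun i : Fin s => hlin i, NeZero.ne s] using hdisp
  ext k
  rw [hlin, hzero, zero_add, Equiv.Perm.one_apply]

variable (hs : 2 ≤ s)
include hs

lemma not_natCast_dvd_one : ¬ (s : ℤ) ∣ 1 := fun h => by
  have := Int.le_of_dvd one_pos h
  omega

lemma genPerm_self (a : ℤ) : genPerm s hs a a = a + 1 := by
  simp [genPerm, genFun]

lemma genPerm_succ (a : ℤ) : genPerm s hs a (a + 1) = a := by
  simp [genPerm, genFun, not_natCast_dvd_one hs]

lemma genPerm_of_not_dvd {a k : ℤ} (h : ¬ (s : ℤ) ∣ k - a) (h' : ¬ (s : ℤ) ∣ k - (a + 1)) :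
    genPerm s hs a k = k := by
  rw [← sub_sub] at h'
  simp [genPerm, genFun, h, h']

lemma genPerm_mul_self (a : ℤ) : genPerm s hs a * genPerm s hs a = 1 :=
  Equiv.ext (genFun_involutive s hs a)

lemma genPerm_mem_periodicPerm (a : ℤ) : genPerm s hs a ∈ periodicPerm s := by
  refine mem_periodicPerm_iff.mpr fun m => ?_
  have hdvd (b : ℤ) : (s : ℤ) ∣ m + s - b ↔ (s : ℤ) ∣ m - b := by
    rw [add_sub_right_comm]
    exact dvd_add_self_right
  change genFun s a (m + s) = genFun s a m + s
  simp only [genFun, sub_sub, hdvd]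
  split_ifs <;> ring

lemma sum_eq_add_of_support {F : ℤ → ℤ} (hF : ∀ k, F (k + s) = F k) (a : ℤ)
    (hsupp : ∀ k, ¬ (s : ℤ) ∣ k - a → ¬ (s : ℤ) ∣ k - (a + 1) → F k = 0) :
    ∑ i : Fin s, F i = F a + F (a + 1) := by
  have : NeZero s := ⟨by omega⟩
  have hne : residue s a ≠ residue s (a + 1) := by
    rw [ne_comm, Ne, residue_eq_iff, add_sub_cancel_left]
    exact not_natCast_dvd_one hs
  rw [Fintype.sum_eq_add _ _ hne fun i hi => ?_, periodic_residue hF, periodic_residue hF]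
  rw [← residue_coe i, Ne, Ne, residue_eq_iff, residue_eq_iff] at hi
  exact hsupp i hi.1 hi.2

lemma genPerm_mem_affSymSet (a : ℤ) : genPerm s hs a ∈ AffSymSet s := by
  have hper := genPerm_mem_periodicPerm hs a
  refine mem_affSymSet_iff.mpr ⟨hper, ?_⟩
  rw [displacement, sum_eq_add_of_support hs (F := fun k => genPerm s hs a k - k)
    (fun k => by rw [mem_periodicPerm_iff.mp hper]; ring) a
    fun k h h' => by rw [genPerm_of_not_dvd hs h h', sub_self], genPerm_self, genPerm_succ]
  ring

lemma sum_sq_mul_genPerm_lt {w : Equiv.Perm ℤ} (hw : w ∈ periodicPerm s) {a : ℤ}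
    (hdesc : w (a + 1) < w a) :
    ∑ i : Fin s, ((w * genPerm s hs a) i - i) ^ 2 < ∑ i : Fin s, (w i - i) ^ 2 := by
  have : NeZero s := ⟨by omega⟩
  set g := genPerm s hs a
  have hg := genPerm_mem_periodicPerm hs a
  have hw_add := mem_periodicPerm_iff.mp hw
  have hg_add := mem_periodicPerm_iff.mp hg
  rw [← sum_periodic_comp (F := fun k => (w k - k) ^ 2) (fun k => by rw [hw_add]; ring) hg,
    ← sub_pos, ← Finset.sum_sub_distrib]
  rw [sum_eq_add_of_support hs (F := fun k => (w (g k) - g k) ^ 2 - ((w * g) k - k) ^ 2)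
    (fun k => by rw [Equiv.Perm.mul_apply, Equiv.Perm.mul_apply, hg_add, hw_add]; ring) a
    fun k h h' => by rw [Equiv.Perm.mul_apply, genPerm_of_not_dvd hs h h', sub_self]]
  rw [Equiv.Perm.mul_apply, Equiv.Perm.mul_apply, genPerm_self, genPerm_succ]
  linarith

theorem affSymSet_induction {P : Equiv.Perm ℤ → Prop} (one : P 1)
    (mul_gen : ∀ w ∈ AffSymSet s, ∀ a, P w → P (w * genPerm s hs a)) {w : Equiv.Perm ℤ}
    (hw : w ∈ AffSymSet s) : P w := by
  have : NeZero s := ⟨by omega⟩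
  induction hn : (∑ i : Fin s, (w i - i) ^ 2).toNat
    using Nat.strong_induction_on generalizing w with
  | _ n ih =>
    by_cases hdesc : ∃ a, w (a + 1) < w a
    · obtain ⟨a, ha⟩ := hdesc
      have hwg := mul_mem_affSymSet hw (genPerm_mem_affSymSet hs a)
      have hlt := sum_sq_mul_genPerm_lt hs (mem_affSymSet_iff.mp hw).1 ha
      have hnonneg : 0 ≤ ∑ i : Fin s, ((w * genPerm s hs a) i - i) ^ 2 :=
        Finset.sum_nonneg fun i _ => sq_nonneg _
      have := mul_gen _ hwg a (ih _ (by omega) hwg rfl)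
      rwa [mul_assoc, genPerm_mul_self, mul_one] at this
    · push Not at hdesc
      have hmono : Monotone w := monotone_int_of_le_succ hdesc
      rwa [eq_one_of_strictMono hw (hmono.strictMono_of_injective w.injective)]

end AffSym

/-! ### The level `t` action -/

section LevelAction

variable {s t : ℕ}

lemma dvd_sub_mul_sub_lc_iff (hst : Nat.Coprime s t) {m k a : ℤ}
    (h : (s : ℤ) ∣ m - (k * t - lc s t)) :
    (s : ℤ) ∣ m - (a * t - lc s t) ↔ (s : ℤ) ∣ k - a := by
  rw [show m - (a * t - lc s t) = (m - (k * t - lc s t)) + (k - a) * t by ring, dvd_add_right h]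
  exact ⟨(Nat.isCoprime_iff_coprime.mpr hst).dvd_of_dvd_mul_right, fun h => h.mul_right _⟩

lemma levelGenFun_apply (hs : 2 ≤ s) (hst : Nat.Coprime s t) {a m k : ℤ}
    (h : (s : ℤ) ∣ m - (k * t - lc s t)) :
    levelGenFun s t (a + 1) m = m + t * (genPerm s hs a k - k) := by
  change _ = m + t * (genFun s a k - k)
  simp only [levelGenFun, genFun, dvd_sub_mul_sub_lc_iff hst h, add_sub_cancel_right, sub_sub]
  split_ifs <;> ring

theorem levelTAction_apply {hs : 2 ≤ s} (hst : Nat.Coprime s t)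
    {Φ : Equiv.Perm ℤ → Equiv.Perm ℤ} (hΦ : IsLevelTAction s t hs Φ) {w : Equiv.Perm ℤ}
    (hw : w ∈ AffSymSet s) {m k : ℤ} (h : (s : ℤ) ∣ m - (k * t - lc s t)) :
    Φ w m = m + t * (w k - k) := by
  revert m k
  refine affSymSet_induction hs (P := fun w => ∀ {m k : ℤ}, (s : ℤ) ∣ m - (k * t - lc s t) →
    Φ w m = m + t * (w k - k)) ?_ ?_ hw
  · have hone : Φ 1 = 1 := by
      simpa using hΦ.1 1 1 one_mem_affSymSet one_mem_affSymSet
    simp [hone]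
  · intro w hw a ih m k h
    have hgen : Φ (genPerm s hs a) m = m + t * (genPerm s hs a k - k) := by
      simpa [levelGenFun_apply hs hst h] using hΦ.2 (a + 1) m
    have hdvd : (s : ℤ) ∣ m + t * (genPerm s hs a k - k) - (genPerm s hs a k * t - lc s t) := by
      convert h using 1
      ring
    rw [hΦ.1 _ _ hw (genPerm_mem_affSymSet hs a), Equiv.Perm.mul_apply, hgen, ih hdvd,
      Equiv.Perm.mul_apply]
    ring

end LevelAction

/-! ### Abacus coordinates -/

section Abacus

variable {s t : ℕ}

lemma two_mul_lc (hst : Nat.Coprime s t) : 2 * lc s t = ((s : ℤ) - 1) * (t - 1) := by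
  refine Int.mul_ediv_cancel' ?_
  obtain hs | ⟨r, rfl⟩ := Nat.even_or_odd s
  · obtain ⟨r, rfl⟩ := (hst.coprime_dvd_left hs.two_dvd).odd_of_left
    exact ⟨(s - 1) * r, by push_cast; ring⟩
  · exact ⟨r * (t - 1), by push_cast; ring⟩

variable (s t) in
/-- The integer in the residue class of `k * t - c` modulo `s` at depth `q`. Every integer is of
this form for coprime `s` and `t`; subtracting `s` or `t` becomes a unit step in `q` or `k`. -/
def abacusPos (k q : ℤ) : ℤ := k * t - lc s t - s * q

lemma abacusPos_sub_left (k q : ℤ) : abacusPos s t k q - s = abacusPos s t k (q + 1) := by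
  rw [abacusPos, abacusPos]
  ring

lemma abacusPos_sub_right (k q : ℤ) : abacusPos s t k q - t = abacusPos s t (k - 1) q := by
  rw [abacusPos, abacusPos]
  ring

lemma neg_one_sub_abacusPos (hst : Nat.Coprime s t) (k q : ℤ) :
    -1 - abacusPos s t k q = abacusPos s t (-1 - k) (1 - t - q) := by
  rw [abacusPos, abacusPos]
  linear_combination two_mul_lc hst

lemma exists_eq_abacusPos (hst : Nat.Coprime s t) (b : ℤ) : ∃ k q, b = abacusPos s t k q := by
  obtain ⟨x, z, h⟩ := Nat.isCoprime_iff_coprime.mpr hst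
  refine ⟨z * (b + lc s t), -(x * (b + lc s t)), ?_⟩
  rw [abacusPos]
  linear_combination (-(b + lc s t)) * h

lemma abacusPos_add_mul (k q r : ℤ) :
    abacusPos s t (k + s * r) (q + t * r) = abacusPos s t k q := by
  rw [abacusPos, abacusPos]
  ring

lemma abacusPos_eq_iff [NeZero s] (hst : Nat.Coprime s t) {k q k' q' : ℤ} :
    abacusPos s t k q = abacusPos s t k' q' ↔ ∃ r, k' = k + s * r ∧ q' = q + t * r := by
  constructor
  · intro h
    rw [abacusPos, abacusPos] at h
    have hdvd : (s : ℤ) ∣ (k' - k) * t := ⟨q' - q, by linarith⟩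
    obtain ⟨r, hr⟩ := (Nat.isCoprime_iff_coprime.mpr hst).dvd_of_dvd_mul_right hdvd
    refine ⟨r, by linarith, mul_left_cancel₀ (Nat.cast_ne_zero.mpr (NeZero.ne s)) ?_⟩
    linear_combination h + t * hr
  · rintro ⟨r, rfl, rfl⟩
    exact (abacusPos_add_mul k q r).symm

end Abacus

/-! ### Profiles of self-conjugate cores -/

/-- Symmetric quasiperiodic functions on the integers. The beta-set of a self-conjugate `s`-core
meets the residue class of `k * t - c` in the positions of depth greater than `y k`, for a unique
such `y`; the core is a `t`-core when `y` is monotone. -/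
@[ext]
structure SymmProfile (s t : ℕ) where
  toFun : ℤ → ℤ
  map_add' : ∀ k, toFun (k + s) = toFun k + t
  map_reflect' : ∀ k, toFun (-1 - k) = -t - toFun k

lemma exists_mem_iff_lt {S : Set ℤ} (hne : S.Nonempty) (hbdd : BddBelow S)
    (hsucc : ∀ q ∈ S, q + 1 ∈ S) : ∃ y, ∀ q, q ∈ S ↔ y < q := by
  refine ⟨sInf S - 1, fun q => ⟨fun hq => ?_, fun hq => ?_⟩⟩
  · have := csInf_le hbdd hq
    omega
  · induction q, (show sInf S ≤ q by omega) using Int.leInduction with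
    | base => exact Int.csInf_mem hne hbdd
    | succ q hle ih => exact hsucc q (ih (by omega))

namespace SymmProfile

variable {s t : ℕ}

instance : CoeFun (SymmProfile s t) fun _ => ℤ → ℤ := ⟨toFun⟩

lemma map_add (y : SymmProfile s t) (k : ℤ) : y (k + s) = y k + t := y.map_add' k

lemma map_add_mul (y : SymmProfile s t) (k r : ℤ) : y (k + s * r) = y k + t * r :=
  quasiperiodic_add_mul y.map_add k r

lemma map_reflect (y : SymmProfile s t) (k : ℤ) : y (-1 - k) = -t - y k := y.map_reflect' k

/-- The beta-set of the self-conjugate `s`-core with profile `y`. -/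
def beta (y : SymmProfile s t) : Set ℤ := {b | ∃ k q, y k < q ∧ abacusPos s t k q = b}

section

variable [NeZero s] (hst : Nat.Coprime s t)
include hst

lemma abacusPos_mem_beta_iff (y : SymmProfile s t) {k q : ℤ} :
    abacusPos s t k q ∈ y.beta ↔ y k < q := by
  constructor
  · rintro ⟨k', q', hlt, h⟩
    obtain ⟨r, rfl, rfl⟩ := (abacusPos_eq_iff hst).mp h
    rw [map_add_mul]
    linarith
  · exact fun h => ⟨k, q, h, rfl⟩

lemma beta_injective : Function.Injective (beta : SymmProfile s t → Set ℤ) := by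
  intro y z h
  ext k
  refine eq_of_forall_gt_iff fun q => ?_
  rw [← abacusPos_mem_beta_iff hst, ← abacusPos_mem_beta_iff hst, h]

lemma mem_beta_iff_neg_one_sub_notMem (y : SymmProfile s t) (b : ℤ) :
    b ∈ y.beta ↔ -1 - b ∉ y.beta := by
  obtain ⟨k, q, rfl⟩ := exists_eq_abacusPos hst b
  rw [neg_one_sub_abacusPos hst, abacusPos_mem_beta_iff hst, abacusPos_mem_beta_iff hst,
    map_reflect]
  omega

lemma sub_mem_beta (y : SymmProfile s t) {b : ℤ} (hb : b ∈ y.beta) : b - s ∈ y.beta := by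
  obtain ⟨k, q, hlt, rfl⟩ := hb
  rw [abacusPos_sub_left, abacusPos_mem_beta_iff hst]
  exact hlt.trans (lt_add_one q)

lemma sub_mem_beta_iff_monotone (y : SymmProfile s t) :
    (∀ b ∈ y.beta, b - t ∈ y.beta) ↔ Monotone y := by
  constructor
  · intro h
    refine monotone_int_of_le_succ fun k => ?_
    have := h _ ((abacusPos_mem_beta_iff hst y).mpr (lt_add_one (y (k + 1))))
    rw [abacusPos_sub_right, add_sub_cancel_right, abacusPos_mem_beta_iff hst] at this
    exact Int.lt_add_one_iff.mp this
  · rintro hmono _ ⟨k, q, hlt, rfl⟩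
    rw [abacusPos_sub_right, abacusPos_mem_beta_iff hst]
    exact (hmono (sub_one_lt k).le).trans_lt hlt

lemma mem_beta_of_lt (y : SymmProfile s t) (hmono : Monotone y) :
    ∀ b < -lc s t - s * (y 0 + t), b ∈ y.beta := by
  intro b hb
  obtain ⟨k, q, rfl⟩ := exists_eq_abacusPos hst b
  obtain ⟨i, r, rfl⟩ := exists_eq_fin_add_mul s k
  obtain ⟨q, rfl⟩ : ∃ p, q = p + t * r := ⟨q - t * r, by ring⟩
  rw [abacusPos_add_mul, abacusPos] at hb
  rw [abacusPos_add_mul, abacusPos_mem_beta_iff hst]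
  have hdepth : (s : ℤ) * (y 0 + t) < s * q := by
    have : 0 ≤ (i : ℤ) * t := by positivity
    linarith
  calc y i ≤ y (0 + s) := hmono (by have := i.isLt; omega)
    _ = y 0 + t := y.map_add 0
    _ < q := lt_of_mul_lt_mul_left hdepth (by positivity)

lemma exists_beta_eq_betaSet {p : Partn} (hself : SelfConj p) (hcore : IsCore s p) :
    ∃ y : SymmProfile s t, y.beta = betaSet p := by
  rw [Partn.selfConj_iff] at hself
  rw [Partn.isCore_iff (NeZero.pos s)] at hcore
  have hs : (0 : ℤ) < s := by exact_mod_cast NeZero.pos s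
  have hthreshold (k : ℤ) : ∃ y, ∀ q, abacusPos s t k q ∈ betaSet p ↔ y < q := by
    refine exists_mem_iff_lt (S := {q | abacusPos s t k q ∈ betaSet p}) ?_ ?_ fun q hq => ?_
    · obtain ⟨N, hN⟩ := p.mem_betaSet_of_lt
      refine ⟨(k * t - lc s t - N) / s + 1, hN _ ?_⟩
      have := Int.lt_mul_ediv_self_add (x := k * t - lc s t - N) hs
      rw [abacusPos]
      linarith
    · refine ⟨(k * t - lc s t - p.f 0) / s, fun q hq => (Int.ediv_lt_of_lt_mul hs ?_).le⟩
      have := p.lt_of_mem_betaSet hq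
      rw [abacusPos] at this
      linarith
    · change abacusPos s t k (q + 1) ∈ betaSet p
      rw [← abacusPos_sub_left]
      exact hcore _ hq
  choose y hy using hthreshold
  refine ⟨⟨y, fun k => ?_, fun k => ?_⟩, ?_⟩
  · refine eq_of_forall_gt_iff fun q => ?_
    rw [← hy, ← lt_sub_iff_add_lt, ← hy, ← abacusPos_add_mul k (q - t) 1]
    ring_nf
  · refine eq_of_forall_gt_iff fun q => ?_
    have hneg := neg_one_sub_abacusPos hst k (1 - t - q)
    rw [← hy, show q = 1 - t - (1 - t - q) by ring, ← hneg, ← not_iff_not, ← hself, hy]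
    omega
  · ext b
    obtain ⟨k, q, rfl⟩ := exists_eq_abacusPos hst b
    rw [abacusPos_mem_beta_iff hst, hy]

lemma exists_betaSet_eq_beta (ht : 0 < t) (y : SymmProfile s t) (hmono : Monotone y) :
    ∃ p, (SelfConj p ∧ IsCore s p ∧ IsCore t p) ∧ betaSet p = y.beta := by
  obtain ⟨p, hp⟩ := exists_betaSet_eq_of_symmetric (y.mem_beta_iff_neg_one_sub_notMem hst)
    (y.mem_beta_of_lt hst hmono)
  refine ⟨p, ?_, hp⟩
  rw [Partn.selfConj_iff, Partn.isCore_iff (NeZero.pos s), Partn.isCore_iff ht, hp]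
  exact ⟨y.mem_beta_iff_neg_one_sub_notMem hst, fun _ => y.sub_mem_beta hst,
    (y.sub_mem_beta_iff_monotone hst).mpr hmono⟩

lemma sSet_eq_range {p : Partn} {y : SymmProfile s t} (hp : y.beta = betaSet p) :
    sSet s p = Set.range fun k => abacusPos s t k (y k) := by
  ext x
  obtain ⟨k, q, rfl⟩ := exists_eq_abacusPos hst x
  have hmem : abacusPos s t k q ∈ sSet s p ↔ y k = q := by
    rw [sSet, Set.mem_ofPred_eq, ← hp, abacusPos_sub_left, abacusPos_mem_beta_iff hst,
      abacusPos_mem_beta_iff hst]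
    omega
  rw [hmem]
  constructor
  · rintro rfl
    exact ⟨k, rfl⟩
  · rintro ⟨k', h⟩
    obtain ⟨r, rfl, rfl⟩ := (abacusPos_eq_iff hst).mp h
    exact y.map_add_mul k' r

omit [NeZero s] in
theorem image_sSet_eq_iff {hs : 2 ≤ s} {Φ : Equiv.Perm ℤ → Equiv.Perm ℤ}
    (hΦ : IsLevelTAction s t hs Φ) {p : Partn} {y : SymmProfile s t} (hp : y.beta = betaSet p)
    {w : Equiv.Perm ℤ} (hw : w ∈ AffSymSet s) :
    Φ w '' sSet s p = sSet s p ↔ ∀ k, y (w k) = y k := by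
  have : NeZero s := ⟨by omega⟩
  have happly (k : ℤ) : Φ w (abacusPos s t k (y k)) = abacusPos s t (w k) (y k) := by
    rw [levelTAction_apply hst hΦ hw (k := k) ⟨-y k, by rw [abacusPos]; ring⟩, abacusPos, abacusPos]
    ring
  rw [sSet_eq_range hst hp, ← Set.range_comp]
  constructor
  · intro h k
    obtain ⟨k', hk'⟩ : abacusPos s t (w k) (y k) ∈ Set.range fun k => abacusPos s t k (y k) := by
      rw [← happly, ← h]
      exact ⟨k, rfl⟩
    obtain ⟨r, hw, hy⟩ := (abacusPos_eq_iff hst).mp hk'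
    rw [hw, hy, map_add_mul]
  · intro h
    have hcomp : (Φ w ∘ fun k => abacusPos s t k (y k)) =
        (fun k => abacusPos s t k (y k)) ∘ w := by
      funext k
      simp only [Function.comp_apply, happly, h]
    rw [hcomp]
    exact w.surjective.range_comp _

theorem exists_equiv_monotone (ht : 0 < t) :
    ∃ e : {p : Partn // SelfConj p ∧ IsCore s p ∧ IsCore t p} ≃
        {y : SymmProfile s t // Monotone y},
      ∀ p, (e p).1.beta = betaSet p.1 := by
  choose y hy using fun p : {p : Partn // SelfConj p ∧ IsCore s p ∧ IsCore t p} =>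
    exists_beta_eq_betaSet (t := t) hst p.2.1 p.2.2.1
  have hmono (p) : Monotone (y p) := by
    rw [← sub_mem_beta_iff_monotone hst, hy]
    exact (Partn.isCore_iff ht p.1).mp p.2.2.2
  refine ⟨Equiv.ofBijective (fun p => ⟨y p, hmono p⟩) ⟨fun p p' h => ?_, fun z => ?_⟩, hy⟩
  · have hyy : y p = y p' := congrArg Subtype.val h
    exact Subtype.ext (Partn.betaSet_injective (by rw [← hy, ← hy, hyy]))
  · obtain ⟨p, hp, hbeta⟩ := exists_betaSet_eq_beta hst ht z.1 z.2
    exact ⟨⟨p, hp⟩, Subtype.ext (beta_injective hst ((hy ⟨p, hp⟩).trans hbeta))⟩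

end

end SymmProfile

/-! ### The finite hyperoctahedral group -/

/-- The hyperoctahedral group, as the permutations of `Fin s` commuting with reversal. -/
def hyperoctahedral (s : ℕ) : Subgroup (Equiv.Perm (Fin s)) :=
  Subgroup.centralizer {Fin.revPerm}

section Hyperoctahedral

variable {s : ℕ}

lemma mem_hyperoctahedral_iff {σ : Equiv.Perm (Fin s)} :
    σ ∈ hyperoctahedral s ↔ ∀ i, σ i.rev = (σ i).rev := by
  rw [hyperoctahedral, Subgroup.mem_centralizer_singleton_iff, Equiv.ext_iff]
  rfl

lemma card_support_revPerm :
    (Fin.revPerm : Equiv.Perm (Fin s)).support.card = s / 2 * 2 := by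
  have hfix : ((Fin.revPerm : Equiv.Perm (Fin s)).supportᶜ).card ≤ 1 := by
    refine Finset.card_le_one.mpr fun i hi j hj => ?_
    rw [Finset.mem_compl, Equiv.Perm.notMem_support, Fin.revPerm_apply, Fin.ext_iff,
      Fin.val_rev] at hi hj
    omega
  have heven : 2 ∣ (Fin.revPerm : Equiv.Perm (Fin s)).support.card :=
    Equiv.Perm.two_dvd_card_support (by ext i; simp [sq])
  have hle := Finset.card_le_univ (Fin.revPerm : Equiv.Perm (Fin s)).support
  rw [Finset.card_compl] at hfix
  rw [Fintype.card_fin] at hfix hle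
  omega

lemma cycleType_revPerm :
    (Fin.revPerm : Equiv.Perm (Fin s)).cycleType = Multiset.replicate (s / 2) 2 := by
  have hsq : (Fin.revPerm : Equiv.Perm (Fin s)) ^ 2 = 1 := by
    ext i
    simp [sq]
  have htwo : ∀ n ∈ (Fin.revPerm : Equiv.Perm (Fin s)).cycleType, n = 2 := fun n hn =>
    le_antisymm
      (Nat.le_of_dvd two_pos
        ((Equiv.Perm.dvd_of_mem_cycleType hn).trans (orderOf_dvd_of_pow_eq_one hsq)))
      (Equiv.Perm.two_le_of_mem_cycleType hn)
  have hsum := Equiv.Perm.sum_cycleType (Fin.revPerm : Equiv.Perm (Fin s))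
  rw [Multiset.eq_replicate_card.mpr htwo] at hsum ⊢
  rw [Multiset.sum_replicate, smul_eq_mul, card_support_revPerm] at hsum
  rw [Nat.eq_of_mul_eq_mul_right two_pos hsum]

theorem card_hyperoctahedral :
    Nat.card (hyperoctahedral s) = 2 ^ (s / 2) * (s / 2).factorial := by
  have hfix : (s - s / 2 * 2).factorial = 1 := by
    rw [Nat.factorial_eq_one]
    omega
  rw [hyperoctahedral, Equiv.Perm.nat_card_centralizer, cycleType_revPerm, Multiset.sum_replicate,
    Multiset.prod_replicate, Fintype.card_fin, smul_eq_mul, hfix, one_mul]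
  obtain h0 | hpos := Nat.eq_zero_or_pos (s / 2)
  · simp [h0]
  · rw [Multiset.toFinset_replicate, if_neg hpos.ne', Finset.prod_singleton,
      Multiset.count_replicate_self]

end Hyperoctahedral

/-- Functions on `Fin s` that are odd under reversal; the value at a fixed point of reversal is
required to vanish, which is not automatic in the presence of 2-torsion. -/
@[ext]
structure OddFun (s : ℕ) (A : Type*) [AddGroup A] where
  toFun : Fin s → A
  map_rev' : ∀ i, toFun i.rev = -toFun i
  map_fixed' : ∀ i, i.rev = i → toFun i = 0

namespace OddFun

variable {s : ℕ} {A : Type*} [AddGroup A]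

instance : CoeFun (OddFun s A) fun _ => Fin s → A := ⟨toFun⟩

lemma map_rev (z : OddFun s A) (i : Fin s) : z i.rev = -z i := z.map_rev' i

lemma map_fixed (z : OddFun s A) {i : Fin s} (hi : i.rev = i) : z i = 0 := z.map_fixed' i hi

/-- The embedding of the first half of `Fin s`. -/
def half (j : Fin (s / 2)) : Fin s := Fin.castLE (Nat.div_le_self s 2) j

lemma half_cases (i : Fin s) : (∃ j, i = half j) ∨ (∃ j, i = (half j).rev) ∨ i.rev = i := by
  have hi := Fin.val_rev i
  obtain hlt | hlt | heq := lt_trichotomy i i.rev |>.imp id Or.symm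
  · rw [Fin.lt_def] at hlt
    exact Or.inl ⟨⟨i, by omega⟩, rfl⟩
  · rw [Fin.lt_def] at hlt
    exact Or.inr (Or.inl ⟨⟨i.rev, by omega⟩, (Fin.rev_rev i).symm⟩)
  · exact Or.inr (Or.inr heq.symm)

lemma forall_of_half {P : A → Prop} (hzero : P 0) (hneg : ∀ a, P a → P (-a)) (z : OddFun s A)
    (h : ∀ j, P (z (half j))) (i : Fin s) : P (z i) := by
  obtain ⟨j, rfl⟩ | ⟨j, rfl⟩ | hi := half_cases i
  · exact h j
  · exact z.map_rev _ ▸ hneg _ (h j)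
  · exact (z.map_fixed hi).symm ▸ hzero

lemma eq_of_half {z z' : OddFun s A} (h : ∀ j, z (half j) = z' (half j)) : z = z' := by
  refine OddFun.ext (funext fun i => ?_)
  obtain ⟨j, rfl⟩ | ⟨j, rfl⟩ | hi := half_cases i
  · exact h j
  · rw [map_rev, map_rev, h]
  · rw [z.map_fixed hi, z'.map_fixed hi]

/-- The odd function with prescribed values on the first half of `Fin s`. -/
def extend (v : Fin (s / 2) → A) : OddFun s A where
  toFun i := if h : (i : ℕ) < s / 2 then v ⟨i, h⟩ else
    if h : (i.rev : ℕ) < s / 2 then -v ⟨i.rev, h⟩ else 0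
  map_rev' i := by
    have hrev := Fin.val_rev i
    by_cases h : (i : ℕ) < s / 2 <;> by_cases h' : (i.rev : ℕ) < s / 2
    · omega
    · simp only [h, h', dif_pos, dif_neg, Fin.rev_rev, not_false_iff]
    · simp only [h, h', dif_pos, dif_neg, Fin.rev_rev, not_false_iff, neg_neg]
    · simp only [h, h', dif_neg, Fin.rev_rev, not_false_iff, neg_zero]
  map_fixed' i hi := by
    have hrev := Fin.val_rev i
    rw [hi] at hrev
    have hmid : ¬ (i : ℕ) < s / 2 := by omega
    simp only [hi, hmid, dif_neg, not_false_iff]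

lemma extend_half (v : Fin (s / 2) → A) (j : Fin (s / 2)) : extend v (half j) = v j :=
  dif_pos j.isLt

/-- An odd function is determined by its values on the first half of `Fin s`. -/
def equivHalf : OddFun s A ≃ (Fin (s / 2) → A) where
  toFun z j := z (half j)
  invFun := extend
  left_inv _ := eq_of_half (extend_half _)
  right_inv v := funext (extend_half v)

instance [Finite A] : Finite (OddFun s A) := Finite.of_equiv _ equivHalf.symm

theorem card_eq : Nat.card (OddFun s A) = Nat.card A ^ (s / 2) := by
  rw [Nat.card_congr equivHalf, Nat.card_fun, Nat.card_fin]

instance : MulAction (hyperoctahedral s) (OddFun s A) where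
  smul σ z :=
    { toFun i := z (σ.1⁻¹ i)
      map_rev' i := (congrArg z (mem_hyperoctahedral_iff.mp (σ⁻¹).2 i)).trans (z.map_rev _)
      map_fixed' i hi := z.map_fixed
        ((mem_hyperoctahedral_iff.mp (σ⁻¹).2 i).symm.trans (congrArg _ hi)) }
  one_smul _ := rfl
  mul_smul _ _ _ := rfl

lemma smul_eq_iff {σ : hyperoctahedral s} {z z' : OddFun s A} :
    σ • z = z' ↔ ∀ i, z' (σ.1 i) = z i := by
  rw [OddFun.ext_iff, funext_iff, ← σ.1.forall_congr_right]
  refine forall_congr' fun i => ?_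
  change z (σ.1⁻¹ (σ.1 i)) = _ ↔ _
  rw [Equiv.Perm.inv_def, Equiv.symm_apply_apply, eq_comm]

lemma exists_intCast_eq {t : ℕ} [NeZero t] (z : OddFun s (ZMod t)) :
    ∃ η : OddFun s ℤ, ∀ i, (η i : ZMod t) = z i ∧ |η i * 2| ≤ (t : ℤ) := by
  set η : OddFun s ℤ := extend fun j => (z (half j)).valMinAbs
  have hcast : (⟨fun i => (η i : ZMod t), fun i => by rw [η.map_rev, Int.cast_neg],
      fun i hi => by rw [η.map_fixed hi, Int.cast_zero]⟩ : OddFun s (ZMod t)) = z :=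
    eq_of_half fun j => (congrArg _ (extend_half _ j)).trans (ZMod.coe_valMinAbs _)
  refine ⟨η, fun i => ⟨congrFun (congrArg toFun hcast) i, ?_⟩⟩
  refine forall_of_half (P := fun a : ℤ => |a * 2| ≤ (t : ℤ)) (by simp) (fun a ha => ?_) η
    (fun j => ?_) i
  · rwa [neg_mul, abs_neg]
  · obtain ⟨hlow, hhigh⟩ := (z (half j)).valMinAbs_mem_Ioc
    rw [extend_half]
    exact abs_le.mpr ⟨hlow.le, hhigh⟩

lemma sort_mem_hyperoctahedral (η : OddFun s ℤ) : Tuple.sort η ∈ hyperoctahedral s := by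
  obtain ⟨hmono, hstable⟩ := (Tuple.eq_sort_iff (f := η)).mp rfl
  set σ := Tuple.sort η
  -- The conjugate of `σ` by reversal also sorts `η` stably, so it is `σ`.
  have hconj : Fin.revPerm * σ * Fin.revPerm = σ := by
    refine Tuple.eq_sort_iff.mpr ⟨fun i j hij => ?_, fun i j hij h => ?_⟩
    · have := hmono (Fin.rev_le_rev.mpr hij)
      simp only [Function.comp_apply, Equiv.Perm.mul_apply, Fin.revPerm_apply, map_rev] at this ⊢
      omega
    · simp only [Equiv.Perm.mul_apply, Fin.revPerm_apply, map_rev, Fin.rev_lt_rev] at h ⊢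
      exact hstable _ _ (Fin.rev_lt_rev.mpr hij) (by omega)
  refine mem_hyperoctahedral_iff.mpr fun i => ?_
  conv_lhs => rw [← hconj]
  simp

end OddFun

/-! ### The affine hyperoctahedral group acting on profiles -/

/-- The affine hyperoctahedral group: the permutations `w` of the integers satisfying
`w (m + s) = w m + s` and `w (-1 - m) = -1 - w m`. -/
def affHyperoctahedral (s : ℕ) : Subgroup (Equiv.Perm ℤ) :=
  periodicPerm s ⊓ Subgroup.centralizer {Equiv.subLeft (-1)}

namespace affHyperoctahedral

variable {s : ℕ}

lemma mem_iff {w : Equiv.Perm ℤ} :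
    w ∈ affHyperoctahedral s ↔ (∀ m, w (m + s) = w m + s) ∧ ∀ m, w (-1 - m) = -1 - w m := by
  rw [affHyperoctahedral, Subgroup.mem_inf, mem_periodicPerm_iff,
    Subgroup.mem_centralizer_singleton_iff, Equiv.ext_iff]
  rfl

lemma le_periodicPerm : affHyperoctahedral s ≤ periodicPerm s := inf_le_left

lemma apply_add (g : affHyperoctahedral s) (m : ℤ) : g.1 (m + s) = g.1 m + s :=
  (mem_iff.mp g.2).1 m

lemma apply_neg_one_sub (g : affHyperoctahedral s) (m : ℤ) : g.1 (-1 - m) = -1 - g.1 m :=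
  (mem_iff.mp g.2).2 m

lemma displacement_eq_zero (g : affHyperoctahedral s) : displacement s g.1 = 0 := by
  have hrev (i : Fin s) : g.1 i.rev - i.rev = -(g.1 i - i) := by
    rw [rev_coe_eq, apply_add, apply_neg_one_sub]
    ring
  have hneg : displacement s g.1 = -displacement s g.1 := by
    conv_lhs => rw [displacement, ← Equiv.sum_comp Fin.revPerm]
    simp only [Fin.revPerm_apply, hrev, Finset.sum_neg_distrib, displacement]
  exact self_eq_neg.mp hneg

lemma mem_affSymSet_and_reflect_iff {w : Equiv.Perm ℤ} :
    (w ∈ AffSymSet s ∧ ∀ m, w (-1 - m) = -1 - w m) ↔ w ∈ affHyperoctahedral s := by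
  rw [mem_affSymSet_iff, mem_periodicPerm_iff, and_right_comm, ← mem_iff]
  exact and_iff_left_of_imp fun hw => displacement_eq_zero ⟨w, hw⟩

section Window

variable [NeZero s]

variable (s) in
/-- The action of the affine hyperoctahedral group on residue classes modulo `s`. -/
def windowHom : affHyperoctahedral s →* hyperoctahedral s :=
  ((residueHom s).comp (Subgroup.inclusion le_periodicPerm)).codRestrict _
    fun g => mem_hyperoctahedral_iff.mpr fun i => by
      rw [← residue_coe i, ← residue_neg_one_sub, MonoidHom.comp_apply, residueHom_residue,
        residueHom_residue, ← residue_neg_one_sub]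
      exact congrArg (residue s) (apply_neg_one_sub g i)

lemma windowHom_residue (g : affHyperoctahedral s) (k : ℤ) :
    (windowHom s g).1 (residue s k) = residue s (g.1 k) :=
  residueHom_residue ⟨g.1, le_periodicPerm g.2⟩ k

/-- The `s`-periodic permutation of the integers sending `i` to `σ i + s * n i` for `i : Fin s`. -/
def windowPerm (σ : Equiv.Perm (Fin s)) (n : Fin s → ℤ) : Equiv.Perm ℤ :=
  ((Int.divModEquiv s).trans (Equiv.prodComm ℤ (Fin s))).symm.permCongr
    (Equiv.prodShear σ fun i => Equiv.addRight (n i))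

lemma windowPerm_add_mul (σ : Equiv.Perm (Fin s)) (n : Fin s → ℤ) (i : Fin s) (q : ℤ) :
    windowPerm σ n (i + s * q) = σ i + s * (q + n i) := by
  simp only [windowPerm, Equiv.permCongr_apply, Equiv.symm_symm, Equiv.trans_apply,
    divModEquiv_add_mul, Equiv.symm_trans_apply, Equiv.prodComm_apply, Equiv.prodComm_symm,
    Prod.swap_prod_mk, Equiv.prodShear_apply, Equiv.coe_addRight, Int.divModEquiv_symm_apply]
  ring

lemma residue_windowPerm (σ : Equiv.Perm (Fin s)) (n : Fin s → ℤ) (i : Fin s) :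
    residue s (windowPerm σ n i) = σ i := by
  simpa [residue_add_mul] using congrArg (residue s) (windowPerm_add_mul σ n i 0)

lemma windowPerm_mem_affHyperoctahedral {σ : Equiv.Perm (Fin s)} (hσ : σ ∈ hyperoctahedral s)
    {n : Fin s → ℤ} (hn : ∀ i, n i.rev = -n i) : windowPerm σ n ∈ affHyperoctahedral s := by
  refine mem_iff.mpr ⟨fun m => ?_, fun m => ?_⟩
  · obtain ⟨i, q, rfl⟩ := exists_eq_fin_add_mul s m
    rw [show (i : ℤ) + s * q + s = i + s * (q + 1) by ring, windowPerm_add_mul,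
      windowPerm_add_mul]
    ring
  · obtain ⟨i, q, rfl⟩ := exists_eq_fin_add_mul s m
    rw [neg_one_sub_add_mul, windowPerm_add_mul, windowPerm_add_mul, neg_one_sub_add_mul,
      mem_hyperoctahedral_iff.mp hσ, hn]
    ring

end Window

end affHyperoctahedral

namespace SymmProfile

variable {s t : ℕ}

open affHyperoctahedral

instance : MulAction (affHyperoctahedral s) (SymmProfile s t) where
  smul g y :=
    { toFun k := y (g.1⁻¹ k)
      map_add' k := (congrArg y (apply_add g⁻¹ k)).trans (y.map_add _)
      map_reflect' k := (congrArg y (apply_neg_one_sub g⁻¹ k)).trans (y.map_reflect _) }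
  one_smul _ := rfl
  mul_smul _ _ _ := rfl

lemma smul_eq_iff {g : affHyperoctahedral s} {y z : SymmProfile s t} :
    g • y = z ↔ ∀ k, z (g.1 k) = y k := by
  rw [SymmProfile.ext_iff, funext_iff, ← g.1.forall_congr_right]
  refine forall_congr' fun k => ?_
  change y (g.1⁻¹ (g.1 k)) = _ ↔ _
  rw [Equiv.Perm.inv_def, Equiv.symm_apply_apply, eq_comm]

lemma map_rev (y : SymmProfile s t) (i : Fin s) : y i.rev = -y i := by
  rw [rev_coe_eq, y.map_add, y.map_reflect]
  ring

/-- The reduction of a profile modulo `t`, a function of the residue modulo `s`. -/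
def reduce (y : SymmProfile s t) : OddFun s (ZMod t) where
  toFun i := (y i : ℤ)
  map_rev' i := by rw [y.map_rev, Int.cast_neg]
  map_fixed' i hi := by
    have hneg := y.map_rev i
    rw [hi, self_eq_neg] at hneg
    rw [hneg, Int.cast_zero]

section

variable [NeZero s]

lemma reduce_residue (y : SymmProfile s t) (k : ℤ) : y.reduce (residue s k) = (y k : ZMod t) := by
  obtain ⟨i, q, rfl⟩ := exists_eq_fin_add_mul s k
  rw [residue_add_mul, y.map_add_mul]
  simp [reduce]

lemma reduce_smul (g : affHyperoctahedral s) (y : SymmProfile s t) :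
    (g • y).reduce = windowHom s g • y.reduce := by
  refine (OddFun.smul_eq_iff.mpr fun i => ?_).symm
  rw [← residue_coe i, windowHom_residue, reduce_residue, reduce_residue, smul_eq_iff.mp rfl]

lemma exists_smul_eq_of_smul_reduce_eq [NeZero t] {y z : SymmProfile s t} {σ : hyperoctahedral s}
    (h : σ • y.reduce = z.reduce) :
    ∃ g : affHyperoctahedral s, windowHom s g = σ ∧ g • y = z := by
  have hdvd (i : Fin s) : ∃ n : ℤ, y i - z (σ.1 i) = t * n :=
    (ZMod.intCast_eq_intCast_iff_dvd_sub _ _ _).mp (OddFun.smul_eq_iff.mp h i)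
  choose n hn using hdvd
  have hodd (i : Fin s) : n i.rev = -n i := by
    have ht : (t : ℤ) ≠ 0 := NeZero.ne _
    refine mul_left_cancel₀ ht ?_
    rw [← hn, mem_hyperoctahedral_iff.mp σ.2, y.map_rev, z.map_rev]
    linarith [hn i]
  refine ⟨⟨windowPerm σ.1 n, windowPerm_mem_affHyperoctahedral σ.2 hodd⟩, ?_,
    smul_eq_iff.mpr fun k => ?_⟩
  · refine Subtype.ext (Equiv.ext fun i => ?_)
    conv_lhs => rw [← residue_coe i]
    rw [windowHom_residue, residue_windowPerm]
  · obtain ⟨i, q, rfl⟩ := exists_eq_fin_add_mul s k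
    rw [windowPerm_add_mul, z.map_add_mul, y.map_add_mul]
    linarith [hn i]

lemma eq_of_windowHom_eq [NeZero t] {y : SymmProfile s t} {g g' : affHyperoctahedral s}
    (hwindow : windowHom s g = windowHom s g') (hsmul : g • y = g' • y) : g = g' := by
  refine Subtype.ext (Equiv.ext fun k => ?_)
  have hres : residue s (g.1 k) = residue s (g'.1 k) := by
    rw [← windowHom_residue, hwindow, windowHom_residue]
  obtain ⟨r, hr⟩ := residue_eq_iff.mp hres
  have hvalue := smul_eq_iff.mp hsmul k
  rw [show g.1 k = g'.1 k + s * r by linarith, map_add_mul, smul_eq_iff.mp rfl,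
    add_eq_left] at hvalue
  have hzero : r = 0 := (mul_eq_zero.mp hvalue).resolve_left (NeZero.ne _)
  linarith [mul_eq_zero_of_right (s : ℤ) hzero]

lemma card_stabilizer_reduce [NeZero t] (y : SymmProfile s t) :
    Nat.card (MulAction.stabilizer (affHyperoctahedral s) y) =
      Nat.card (MulAction.stabilizer (hyperoctahedral s) y.reduce) := by
  refine Nat.card_eq_of_bijective (fun g => ⟨windowHom s g.1, ?_⟩) ⟨fun g g' h => ?_, fun σ => ?_⟩
  · rw [MulAction.mem_stabilizer_iff, ← reduce_smul, g.2]
  · exact Subtype.ext (eq_of_windowHom_eq (congrArg Subtype.val h) (g.2.trans g'.2.symm))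
  · obtain ⟨g, hg, hsmul⟩ := exists_smul_eq_of_smul_reduce_eq σ.2
    exact ⟨⟨g, hsmul⟩, Subtype.ext hg⟩

/-! ### Monotone profiles represent the orbits -/

/-- The profile with prescribed values on the window `{0, …, s - 1}`. -/
def ofOddFun (t : ℕ) (η : OddFun s ℤ) : SymmProfile s t where
  toFun := quasiExtend t η
  map_add' := quasiExtend_add t η
  map_reflect' := quasiExtend_neg_one_sub t η.map_rev

lemma reduce_ofOddFun (η : OddFun s ℤ) (i : Fin s) : (ofOddFun t η).reduce i = (η i : ZMod t) := by
  have hwindow := quasiExtend_add_mul t η i 0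
  rw [mul_zero, mul_zero, add_zero, add_zero] at hwindow
  exact congrArg _ hwindow

lemma exists_monotone_smul_reduce_eq [NeZero t] (z : OddFun s (ZMod t)) :
    ∃ y : SymmProfile s t, Monotone y ∧ ∃ σ : hyperoctahedral s, σ • y.reduce = z := by
  obtain ⟨η, hη⟩ := z.exists_intCast_eq
  set σ : hyperoctahedral s := ⟨Tuple.sort η, η.sort_mem_hyperoctahedral⟩
  have hspread (i j : Fin s) : η i ≤ η j + t := by
    linarith [(abs_le.mp (hη i).2).2, (abs_le.mp (hη j).2).1]
  refine ⟨ofOddFun t (σ⁻¹ • η), quasiExtend_monotone (Tuple.monotone_sort η)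
    fun i j => hspread (σ.1 i) (σ.1 j), σ, OddFun.smul_eq_iff.mpr fun i => ?_⟩
  rw [reduce_ofOddFun]
  exact (hη (σ.1 i)).1.symm

end

lemma apply_le_of_monotone_comp [NeZero s] {y : ℤ → ℤ} (hy : Monotone y) (g : affHyperoctahedral s)
    (hyg : Monotone fun k => y (g.1 k)) (k : ℤ) : y (g.1 k) ≤ y k := by
  -- Otherwise `g` maps a finite interval, symmetric under some `m ↦ s * q - 1 - m`, into its
  -- proper interior.
  by_contra! hlt
  have hlower (j : ℤ) (hj : k ≤ j) : k < g.1 j :=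
    hy.reflect_lt (hlt.trans_le (hyg hj))
  obtain ⟨q, hq⟩ : ∃ q : ℤ, 2 * k + 1 ≤ s * q :=
    ⟨|2 * k + 1|, (le_abs_self _).trans
      (le_mul_of_one_le_left (abs_nonneg _) (by exact_mod_cast NeZero.one_le))⟩
  have hupper (j : ℤ) (hj : j ≤ -1 - k + s * q) : g.1 j < -1 - k + s * q := by
    have := hlower (-1 - j + s * q) (by linarith)
    rw [quasiperiodic_add_mul (apply_add g), apply_neg_one_sub] at this
    linarith
  have hcard := Finset.card_le_card_of_injOn (s := Finset.Icc k (-1 - k + s * q))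
    (t := Finset.Ioo k (-1 - k + s * q)) g.1
    (fun j hj => by
      rw [Finset.coe_Icc, Set.mem_Icc] at hj
      exact Finset.mem_coe.mpr (Finset.mem_Ioo.mpr ⟨hlower j hj.1, hupper j hj.2⟩))
    g.1.injective.injOn
  rw [Int.card_Icc, Int.card_Ioo] at hcard
  omega

lemma eq_of_smul_eq_of_monotone [NeZero s] {y z : SymmProfile s t} (hy : Monotone y)
    (hz : Monotone z) {g : affHyperoctahedral s} (h : g • y = z) : y = z := by
  rw [smul_eq_iff] at h
  have hle (k : ℤ) : y k ≤ z k :=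
    h k ▸ apply_le_of_monotone_comp hz g (by simpa only [h] using hy) k
  ext k
  have hreflect := hle (-1 - k)
  rw [y.map_reflect, z.map_reflect] at hreflect
  exact le_antisymm (hle k) (by linarith)

end SymmProfile

/-! ### Counting by orbits -/

theorem finsum_inv_card_stabilizer {H Y ι : Type*} [Group H] [Finite H] [MulAction H Y] [Finite Y]
    (y : ι → Y) (hy : Function.Bijective fun i => Quotient.mk (MulAction.orbitRel H Y) (y i)) :
    ∑ᶠ i, (1 : ℚ) / Nat.card (MulAction.stabilizer H (y i)) = Nat.card Y / Nat.card H := by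
  classical
  have := Fintype.ofFinite H
  have := Fintype.ofFinite Y
  have hcard (i) : Nat.card (MulAction.stabilizer H (y i)) =
      Fintype.card (MulAction.stabilizer H (Quotient.mk (MulAction.orbitRel H Y) (y i)).out) := by
    have hout := Quotient.mk_out (s := MulAction.orbitRel H Y) (y i)
    rw [← Nat.card_eq_fintype_card]
    exact (Nat.card_congr (MulAction.stabilizerEquivStabilizerOfOrbitRel hout).toEquiv).symm
  have hH : (Fintype.card H : ℚ) ≠ 0 := Nat.cast_ne_zero.mpr Fintype.card_ne_zero
  rw [finsum_eq_of_bijective _ hy (g := fun ω =>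
      (1 : ℚ) / Fintype.card (MulAction.stabilizer H ω.out)) fun i => by rw [hcard],
    finsum_eq_sum_of_fintype, Nat.card_eq_fintype_card, Nat.card_eq_fintype_card, eq_div_iff hH,
    Finset.sum_mul, MulAction.card_eq_sum_card_group_div_card_stabilizer H Y, Nat.cast_sum]
  refine Finset.sum_congr rfl fun ω _ => ?_
  have hdvd := Subgroup.card_subgroup_dvd_card (MulAction.stabilizer H ω.out)
  rw [Nat.card_eq_fintype_card, Nat.card_eq_fintype_card] at hdvd
  rw [Nat.cast_div hdvd (Nat.cast_ne_zero.mpr Fintype.card_ne_zero), one_div_mul_eq_div]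

section Count

variable {s t : ℕ} [NeZero s] [NeZero t]

lemma bijective_reduce_orbit :
    Function.Bijective fun y : {y : SymmProfile s t // Monotone y} =>
      Quotient.mk (MulAction.orbitRel (hyperoctahedral s) (OddFun s (ZMod t))) y.1.reduce := by
  refine ⟨fun y z h => ?_, fun ω => ?_⟩
  · obtain ⟨σ, hσ⟩ := MulAction.orbitRel_apply.mp (Quotient.exact h)
    obtain ⟨g, -, hg⟩ := SymmProfile.exists_smul_eq_of_smul_reduce_eq hσ
    exact Subtype.ext (SymmProfile.eq_of_smul_eq_of_monotone z.2 y.2 hg).symm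
  · induction ω using Quotient.inductionOn with
    | h z =>
      obtain ⟨y, hy, σ, rfl⟩ := SymmProfile.exists_monotone_smul_reduce_eq z
      exact ⟨⟨y, hy⟩, Quotient.sound (MulAction.orbitRel_apply.mpr ⟨σ⁻¹, inv_smul_smul σ _⟩)⟩

variable (s t) in
theorem finsum_inv_card_stabilizer_monotone :
    ∑ᶠ y : {y : SymmProfile s t // Monotone y},
        (1 : ℚ) / Nat.card (MulAction.stabilizer (affHyperoctahedral s) y.1) =
      (t : ℚ) ^ (s / 2) / (2 ^ (s / 2) * Nat.factorial (s / 2)) := by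
  simp only [SymmProfile.card_stabilizer_reduce]
  rw [finsum_inv_card_stabilizer _ bijective_reduce_orbit, OddFun.card_eq, card_hyperoctahedral,
    Nat.card_zmod]
  push_cast
  rfl

end Count

/-- The sum over all self-conjugate `(s,t)`-cores of the reciprocals of the orders of
their stabilisers under the level `t` action of `H̃_s` equals `t^u/(2^u · u!)`,
with `u = ⌊s/2⌋`. -/
theorem denom_sum_sc (s t : ℕ) (hs : 2 ≤ s) (ht : 0 < t) (hst : Nat.Coprime s t)
    (Φ : Equiv.Perm ℤ → Equiv.Perm ℤ) (hΦ : IsLevelTAction s t hs Φ) :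
    (∑ᶠ p ∈ {p : Partn | SelfConj p ∧ IsCore s p ∧ IsCore t p},
        (1 : ℚ) / (Nat.card {w : Equiv.Perm ℤ //
          (w ∈ AffSymSet s ∧ ∀ m : ℤ, w (-1 - m) = -1 - w m) ∧
          ⇑(Φ w) '' sSet s p = sSet s p})) =
      (t : ℚ) ^ (s / 2) / (2 ^ (s / 2) * Nat.factorial (s / 2)) := by
  have : NeZero s := ⟨by omega⟩
  have : NeZero t := ⟨ht.ne'⟩
  obtain ⟨e, he⟩ := SymmProfile.exists_equiv_monotone hst ht
  rw [← finsum_inv_card_stabilizer_monotone s t, ← finsum_set_coe_eq_finsum_mem]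
  refine finsum_eq_of_bijective e e.bijective fun p => ?_
  congr 2
  refine Nat.card_congr ((Equiv.subtypeEquivRight fun w => ?_).trans
    (Equiv.subtypeSubtypeEquivSubtypeInter (· ∈ affHyperoctahedral s)
      fun w => ∀ k, (e p).1 (w k) = (e p).1 k).symm |>.trans
    (Equiv.subtypeEquivRight fun g => SymmProfile.smul_eq_iff.symm))
  rw [← affHyperoctahedral.mem_affSymSet_and_reflect_iff]
  exact and_congr_right fun hw => SymmProfile.image_sSet_eq_iff hst hΦ (he p) hw.1
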